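/- arXiv:1503.07211 — 2 statements merged into one kernel-verified Lean document; each statement's English description precedes it below -/
import Mathlib

section
/- Let n ≥ 2 and let m be a natural number with m ≥ 2^{n-1} − 1. Then the set { p^⊤R : p in the closure of E_m, R in the closure of F_{m,n} } equals the whole simplex Δ_n of probability distributions on {0,1}^n. -/
open Finset

/-- The logistic sigmoid function `σ(a) = 1/(1+exp(-a))`. -/
noncomputable def sigmoid (a : ℝ) : ℝ := 1 / (1 + Real.exp (-a))

/-- Real value of a bit. -/
def bval (b : Bool) : ℝ := if b then 1 else 0

/-- The set `F_{k,m}` of Markov kernels representable by a feedforward layer of `m`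
sigmoid stochastic units with `k` binary inputs. -/
noncomputable def Fset (k m : ℕ) : Set ((Fin k → Bool) → (Fin m → Bool) → ℝ) :=
  {P | ∃ (V : Fin m → Fin k → ℝ) (c : Fin m → ℝ), ∀ y z,
    P y z = ∏ j, (if z j then sigmoid ((∑ i, V j i * bval (y i)) + c j)
                  else 1 - sigmoid ((∑ i, V j i * bval (y i)) + c j))}

/-- `Δ_{k,n}`: all Markov kernels from `{0,1}^k` to distributions on `{0,1}^n`. -/
def markovKernels (k n : ℕ) : Set ((Fin k → Bool) → (Fin n → Bool) → ℝ) :=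
  {P | (∀ y x, 0 ≤ P y x) ∧ ∀ y, ∑ x, P y x = 1}

/-- Composition of Markov kernels: `(R ∘ Q)(x|y) = ∑_z Q(z|y) R(x|z)`. -/
noncomputable def kcomp {k m n : ℕ} (R : (Fin m → Bool) → (Fin n → Bool) → ℝ)
    (Q : (Fin k → Bool) → (Fin m → Bool) → ℝ) : (Fin k → Bool) → (Fin n → Bool) → ℝ :=
  fun y x => ∑ z, Q y z * R z x

/-- `Δ_n`: probability distributions on `{0,1}^n`. -/
def simplex (n : ℕ) : Set ((Fin n → Bool) → ℝ) :=
  {p | (∀ x, 0 ≤ p x) ∧ ∑ x, p x = 1}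

/-- `Δ_n^+`: strictly positive probability distributions on `{0,1}^n`. -/
def simplexPos (n : ℕ) : Set ((Fin n → Bool) → ℝ) :=
  {p | (∀ x, 0 < p x) ∧ ∑ x, p x = 1}

/-- Mixture `p^⊤ R` of the rows of a kernel `R` with weights `p`. -/
noncomputable def mix {m n : ℕ} (p : (Fin m → Bool) → ℝ)
    (R : (Fin m → Bool) → (Fin n → Bool) → ℝ) : (Fin n → Bool) → ℝ :=
  fun x => ∑ z, p z * R z x

/-- `E_m`: strictly positive product distributions on `{0,1}^m`, where the `j`-th bit
is `0` with probability `q j ∈ (0,1)`. -/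
def Eset (m : ℕ) : Set ((Fin m → Bool) → ℝ) :=
  {p | ∃ q : Fin m → ℝ, (∀ j, q j ∈ Set.Ioo (0:ℝ) 1) ∧
    ∀ z, p z = ∏ j, (if z j then 1 - q j else q j)}

/-- Integer value of a binary vector (bit `i` has weight `2^i`). -/
def intval {k : ℕ} (y : Fin k → Bool) : ℕ := ∑ i, if y i then 2 ^ (i : ℕ) else 0

/-- `l(z)`: position (1-based) of the largest nonzero entry of `z`, and `0` if `z = 0`. -/
def lidx {N : ℕ} (z : Fin N → Bool) : ℕ :=
  (Finset.univ.filter (fun j => z j = true)).sup (fun j => (j : ℕ) + 1)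

/-- `bin_n(l)`: the `n`-bit binary representation of `l`. -/
def binVec (n l : ℕ) : Fin n → Bool := fun i => Nat.testBit l (i : ℕ)

/-- Point measure at `x ∈ {0,1}^n`. -/
noncomputable def deltaAt {n : ℕ} (x : Fin n → Bool) : (Fin n → Bool) → ℝ :=
  fun x' => if x' = x then 1 else 0

/-!
Split the `2 ^ n` states into the `2 ^ (n - 1)` edges in the direction of the first output bit. A
strictly positive distribution is a convex combination of distributions on these edges, and each
hidden unit splits off one edge: when the unit is on, large weights force the remaining output bits
to the vertex naming that edge, whatever the other hidden units do, and when it is off, the network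
built so far is left as it was. The weight from the new unit to the first output bit stays finite;
by the intermediate value theorem it can be chosen so that, averaged over the other hidden units,
the first output bit has the prescribed conditional distribution on the edge. The last edge is
produced by the biases alone, hence `2 ^ (n - 1) - 1` hidden units suffice. Compactness extends the
result from strictly positive distributions to the whole simplex.
-/

open Filter Topology

section GeneralLemmas

lemma sum_cube_succ {α M : Type*} [Fintype α] [AddCommMonoid M] {m : ℕ}
    (f : (Fin (m + 1) → α) → M) :
    ∑ z, f z = ∑ a, ∑ z : Fin m → α, f (Fin.cons a z) := by
  rw [← (Fin.consEquiv fun _ => α).sum_comp, Fintype.sum_prod_type]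
  rfl

lemma stdSimplex_subset_closure_pos {ι : Type*} [Fintype ι] [Nonempty ι] :
    stdSimplex ℝ ι ⊆ closure {p ∈ stdSimplex ℝ ι | ∀ i, 0 < p i} := by
  intro p hp
  let uniform : ι → ℝ := fun _ => (Fintype.card ι : ℝ)⁻¹
  have uniform_pos : ∀ i, 0 < uniform i := fun _ => by positivity
  have uniform_mem : uniform ∈ stdSimplex ℝ ι :=
    ⟨fun i => (uniform_pos i).le, by simp [uniform]⟩
  have openSegment_pos : openSegment ℝ p uniform ⊆ {p ∈ stdSimplex ℝ ι | ∀ i, 0 < p i} := by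
    intro q hq
    refine ⟨(convex_stdSimplex ℝ ι).openSegment_subset hp uniform_mem hq, fun i => ?_⟩
    obtain ⟨a, b, ha, hb, -, rfl⟩ := hq
    exact add_pos_of_nonneg_of_pos (mul_nonneg ha.le (hp.1 i)) (mul_pos hb (uniform_pos i))
  refine closure_mono openSegment_pos ?_
  rw [closure_openSegment]
  exact left_mem_segment ℝ p uniform

lemma sum_smul_mem_of_forall_mix_mem {ι E : Type*} [AddCommMonoid E] [Module ℝ E]
    {e : ι → E} {A : ℕ → Set E} (base : ∀ m i, e i ∈ A m)
    (step : ∀ m i, ∀ q ∈ A m, ∀ w ∈ Set.Ioo (0 : ℝ) 1, w • e i + (1 - w) • q ∈ A (m + 1))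
    {s : Finset ι} (hs : s.Nonempty) {m : ℕ} (hcard : #s ≤ m + 1) {w : ι → ℝ}
    (hw : ∀ i ∈ s, 0 < w i) (hsum : ∑ i ∈ s, w i = 1) :
    ∑ i ∈ s, w i • e i ∈ A m := by
  induction hs using Finset.Nonempty.cons_induction generalizing m w with
  | singleton i =>
    rw [sum_singleton] at hsum ⊢
    rw [hsum, one_smul]
    exact base m i
  | cons i s hi hs ih =>
    rw [card_cons] at hcard
    obtain ⟨m, rfl⟩ : ∃ m', m = m' + 1 := ⟨m - 1, by have := hs.card_pos; omega⟩
    rw [forall_mem_cons] at hw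
    rw [sum_cons] at hsum ⊢
    have rest_pos : 0 < ∑ j ∈ s, w j := sum_pos hw.2 hs
    have rest_eq : 1 - w i = ∑ j ∈ s, w j := by linarith
    have rest_mem : ∑ j ∈ s, (w j / (1 - w i)) • e j ∈ A m := by
      refine ih (by omega) (fun j hj => div_pos (hw.2 j hj) (rest_eq ▸ rest_pos)) ?_
      rw [← sum_div, ← rest_eq, div_self (rest_eq ▸ rest_pos.ne')]
    convert step m i _ rest_mem (w i) ⟨hw.1, by linarith⟩ using 2
    rw [smul_sum]
    refine sum_congr rfl fun j _ => ?_
    rw [smul_smul, mul_div_cancel₀ _ (rest_eq ▸ rest_pos.ne')]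

end GeneralLemmas

section Sigmoid

lemma sigmoid_eq_real_sigmoid : sigmoid = Real.sigmoid :=
  funext fun a => one_div (1 + Real.exp (-a))

lemma tendsto_sigmoid_signed_add (b : Bool) (a : ℝ) :
    Tendsto (fun t => sigmoid ((if b then t else -t) + a)) atTop (𝓝 (bval b)) := by
  rw [sigmoid_eq_real_sigmoid]
  cases b
  · simpa [bval, Function.comp_def] using Real.tendsto_sigmoid_atBot.comp
      (tendsto_atBot_add_const_right _ a tendsto_neg_atTop_atBot)
  · simpa [bval, Function.comp_def] using Real.tendsto_sigmoid_atTop.comp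
      (tendsto_atTop_add_const_right _ a tendsto_id)

lemma exists_sum_mul_sigmoid_eq {ι : Type*} [Fintype ι] {p : ι → ℝ} (hp : ∑ i, p i = 1)
    (a : ι → ℝ) {r : ℝ} (hr : r ∈ Set.Ioo (0 : ℝ) 1) :
    ∃ t, ∑ i, p i * sigmoid (t + a i) = r := by
  rw [sigmoid_eq_real_sigmoid]
  let mean : ℝ → ℝ := fun t => ∑ i, p i * Real.sigmoid (t + a i)
  have mean_continuous : Continuous mean :=
    continuous_finsetSum _ fun i _ =>
      continuous_const.mul (continuous_sigmoid.comp (continuous_add_const (a i)))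
  have mean_atTop : Tendsto mean atTop (𝓝 (∑ i, p i * 1)) :=
    tendsto_finsetSum _ fun i _ => tendsto_const_nhds.mul
      (Real.tendsto_sigmoid_atTop.comp (tendsto_atTop_add_const_right _ (a i) tendsto_id))
  have mean_atBot : Tendsto mean atBot (𝓝 (∑ i, p i * 0)) :=
    tendsto_finsetSum _ fun i _ => tendsto_const_nhds.mul
      (Real.tendsto_sigmoid_atBot.comp (tendsto_atBot_add_const_right _ (a i) tendsto_id))
  simp only [mul_one, hp, mul_zero, sum_const_zero] at mean_atTop mean_atBot
  obtain ⟨t₀, h₀⟩ := (mean_atBot.eventually_lt_const hr.1).exists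
  obtain ⟨t₁, h₁⟩ := (mean_atTop.eventually_const_lt hr.2).exists
  exact mem_range_of_exists_le_of_exists_ge mean_continuous ⟨t₀, h₀.le⟩ ⟨t₁, h₁.le⟩

end Sigmoid

section ProductDistributions

/-- Mass function of the Bernoulli distribution on `Bool` in which `true` has probability `s`. -/
def bernoulliMass (s : ℝ) (b : Bool) : ℝ := if b then s else 1 - s

/-- Joint mass function of independent bits, where the bit `j` is `true` with probability `s j`.
`Eset` is parametrized by the complementary probabilities `1 - s j`. -/
def prodBernoulli {ι : Type*} [Fintype ι] (s : ι → ℝ) : (ι → Bool) → ℝ :=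
  fun z => ∏ j, bernoulliMass (s j) (z j)

/-- Joint mass function of a bit that is `true` with probability `s`, placed at index `0`, and an
independent vector with mass function `p`. -/
def prependBit {m : ℕ} (s : ℝ) (p : (Fin m → Bool) → ℝ) : (Fin (m + 1) → Bool) → ℝ :=
  fun z => bernoulliMass s (z 0) * p (Fin.tail z)

variable {m n : ℕ}

lemma continuous_prodBernoulli {ι : Type*} [Fintype ι] :
    Continuous (prodBernoulli : (ι → ℝ) → (ι → Bool) → ℝ) := by
  refine continuous_pi fun z => continuous_finsetProd _ fun j _ => ?_
  unfold bernoulliMass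
  split_ifs <;> fun_prop

lemma prodBernoulli_mem_stdSimplex {ι : Type*} [Fintype ι] [DecidableEq ι] {s : ι → ℝ}
    (hs : ∀ j, s j ∈ Set.Icc (0 : ℝ) 1) : prodBernoulli s ∈ stdSimplex ℝ (ι → Bool) := by
  refine ⟨fun z => prod_nonneg fun j _ => ?_, ?_⟩
  · unfold bernoulliMass
    split_ifs
    exacts [(hs j).1, sub_nonneg.2 (hs j).2]
  · calc ∑ z, prodBernoulli s z
      _ = ∏ j, ∑ b, bernoulliMass (s j) b :=
        (Fintype.prod_sum fun j b => bernoulliMass (s j) b).symm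
      _ = 1 := by simp [bernoulliMass]

lemma prodBernoulli_bval (x : Fin m → Bool) :
    prodBernoulli (fun j => bval (x j)) = deltaAt x := by
  have bernoulliMass_bval (a b : Bool) : bernoulliMass (bval a) b = if b = a then 1 else 0 := by
    cases a <;> cases b <;> simp [bernoulliMass, bval]
  funext z
  simp [prodBernoulli, bernoulliMass_bval, prod_ite_zero, deltaAt, funext_iff]

lemma prependBit_prodBernoulli (s₀ : ℝ) (s : Fin m → ℝ) :
    prependBit s₀ (prodBernoulli s) = prodBernoulli (Fin.cons s₀ s) := by
  funext z
  simp [prependBit, prodBernoulli, Fin.prod_univ_succ, Fin.tail]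

lemma continuous_prependBit (s : ℝ) :
    Continuous (prependBit s : ((Fin m → Bool) → ℝ) → (Fin (m + 1) → Bool) → ℝ) := by
  unfold prependBit
  fun_prop

lemma mix_prependBit (s : ℝ) (p : (Fin m → Bool) → ℝ)
    (R : (Fin (m + 1) → Bool) → (Fin n → Bool) → ℝ) :
    mix (prependBit s p) R =
      s • mix p (fun z => R (Fin.cons true z)) +
        (1 - s) • mix p (fun z => R (Fin.cons false z)) := by
  funext x
  simp [mix, prependBit, bernoulliMass, sum_cube_succ, mul_sum, mul_assoc]

lemma mix_prependBit_const {p : (Fin m → Bool) → ℝ} (hp : ∑ z, p z = 1)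
    (s : (Fin m → Bool) → ℝ) (q : (Fin n → Bool) → ℝ) :
    mix p (fun z => prependBit (s z) q) = prependBit (∑ z, p z * s z) q := by
  funext x
  cases hx : x 0 <;>
    simp [mix, prependBit, bernoulliMass, hx, ← mul_assoc, ← sum_mul, mul_sub, hp]

/-- The marginal distribution of all bits but the one at index `0`. -/
def tailMarginal (p : (Fin (m + 1) → Bool) → ℝ) : (Fin m → Bool) → ℝ :=
  fun x => p (Fin.cons true x) + p (Fin.cons false x)

lemma sum_tailMarginal (p : (Fin (m + 1) → Bool) → ℝ) :
    ∑ x, tailMarginal p x = ∑ z, p z := by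
  simp [tailMarginal, sum_cube_succ p, sum_add_distrib]

lemma sum_tailMarginal_smul_prependBit_deltaAt {p : (Fin (m + 1) → Bool) → ℝ}
    (hp : ∀ x, tailMarginal p x ≠ 0) :
    ∑ x, tailMarginal p x • prependBit (p (Fin.cons true x) / tailMarginal p x) (deltaAt x) =
      p := by
  have edge_mass (x b) :
      tailMarginal p x * bernoulliMass (p (Fin.cons true x) / tailMarginal p x) b =
        p (Fin.cons b x) := by
    cases b
    · simp only [bernoulliMass, Bool.false_eq_true, if_false, mul_sub, mul_one,
        mul_div_cancel₀ _ (hp x)]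
      exact add_sub_cancel_left _ _
    · simp [bernoulliMass, mul_div_cancel₀ _ (hp x)]
  funext z
  simp [prependBit, deltaAt, edge_mass]

end ProductDistributions

section Layers

/-- The net input `v · z + c` of a unit with weights `v` and bias `c` on the binary vector `z`. -/
noncomputable def preactivation {m : ℕ} (v : Fin m → ℝ) (c : ℝ) (z : Fin m → Bool) : ℝ :=
  (∑ i, v i * bval (z i)) + c

/-- The kernel obtained from `R` by adding an input bit at index `0` which, when on, overrides the
output by the fixed state `x`. -/
noncomputable def overrideKernel {m n : ℕ} (x : Fin n → Bool)
    (R : (Fin m → Bool) → (Fin n → Bool) → ℝ) : (Fin (m + 1) → Bool) → (Fin n → Bool) → ℝ :=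
  fun z => if z 0 then deltaAt x else R (Fin.tail z)

variable {m n : ℕ}

lemma preactivation_cons (a : ℝ) (v : Fin m → ℝ) (c : ℝ) (b : Bool) (z : Fin m → Bool) :
    preactivation (Fin.cons a v) c (Fin.cons b z : Fin (m + 1) → Bool) =
      a * bval b + preactivation v c z := by
  simp [preactivation, Fin.sum_univ_succ, add_assoc]

lemma mem_Eset_iff {p : (Fin m → Bool) → ℝ} :
    p ∈ Eset m ↔ ∃ s : Fin m → ℝ, (∀ j, s j ∈ Set.Ioo (0 : ℝ) 1) ∧ p = prodBernoulli s := by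
  constructor
  · rintro ⟨q, hq, hp⟩
    refine ⟨fun j => 1 - q j, fun j => Set.Ioo.one_sub_mem (hq j), funext fun z => ?_⟩
    simp [hp, prodBernoulli, bernoulliMass]
  · rintro ⟨s, hs, rfl⟩
    refine ⟨fun j => 1 - s j, fun j => Set.Ioo.one_sub_mem (hs j), fun z => ?_⟩
    simp [prodBernoulli, bernoulliMass]

lemma mem_Fset_iff {R : (Fin m → Bool) → (Fin n → Bool) → ℝ} :
    R ∈ Fset m n ↔ ∃ (V : Fin n → Fin m → ℝ) (c : Fin n → ℝ),
      R = fun z => prodBernoulli fun j => sigmoid (preactivation (V j) (c j) z) := by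
  simp only [funext_iff]
  rfl

lemma prependBit_mem_Eset {w : ℝ} (hw : w ∈ Set.Ioo (0 : ℝ) 1) {p : (Fin m → Bool) → ℝ}
    (hp : p ∈ Eset m) : prependBit w p ∈ Eset (m + 1) := by
  obtain ⟨s, hs, rfl⟩ := mem_Eset_iff.1 hp
  rw [prependBit_prodBernoulli]
  exact mem_Eset_iff.2 ⟨_, Fin.cases hw hs, rfl⟩

lemma prependBit_sigmoid_mem_closure_Fset (v : Fin m → ℝ) (c : ℝ)
    {R : (Fin m → Bool) → (Fin n → Bool) → ℝ} (hR : R ∈ closure (Fset m n)) :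
    (fun z => prependBit (sigmoid (preactivation v c z)) (R z)) ∈ closure (Fset m (n + 1)) := by
  have hcont : Continuous fun (R : (Fin m → Bool) → (Fin n → Bool) → ℝ) z =>
      prependBit (sigmoid (preactivation v c z)) (R z) :=
    continuous_pi fun z => (continuous_prependBit _).comp (continuous_apply z)
  refine map_mem_closure hcont hR fun R hR => ?_
  obtain ⟨V, d, rfl⟩ := mem_Fset_iff.1 hR
  refine mem_Fset_iff.2 ⟨Fin.cons v V, Fin.cons c d, funext fun z => ?_⟩
  refine (prependBit_prodBernoulli _ _).trans (congrArg prodBernoulli (funext fun j => ?_))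
  cases j using Fin.cases <;> rfl

lemma const_deltaAt_mem_closure_Fset (x : Fin n → Bool) :
    (fun _ => deltaAt x) ∈ closure (Fset m n) := by
  let bias : ℝ → Fin n → ℝ := fun t j => if x j then t else -t
  have hlim : Tendsto (fun t (_ : Fin m → Bool) => prodBernoulli fun j => sigmoid (bias t j))
      atTop (𝓝 fun _ => deltaAt x) := by
    rw [← prodBernoulli_bval]
    refine tendsto_pi_nhds.2 fun _ => (continuous_prodBernoulli.tendsto _).comp
      (tendsto_pi_nhds.2 fun j => ?_)
    simpa using tendsto_sigmoid_signed_add (x j) 0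
  refine mem_closure_of_tendsto hlim (Eventually.of_forall fun t => ?_)
  exact mem_Fset_iff.2 ⟨0, bias t, by simp [preactivation]⟩

lemma overrideKernel_mem_closure_Fset_of_mem (x : Fin n → Bool)
    {R : (Fin m → Bool) → (Fin n → Bool) → ℝ} (hR : R ∈ Fset m n) :
    overrideKernel x R ∈ closure (Fset (m + 1) n) := by
  obtain ⟨V, c, rfl⟩ := mem_Fset_iff.1 hR
  let weights : ℝ → Fin n → Fin (m + 1) → ℝ :=
    fun t j => Fin.cons (if x j then t else -t) (V j)
  refine mem_closure_of_tendsto (b := atTop)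
    (f := fun t z => prodBernoulli fun j => sigmoid (preactivation (weights t j) (c j) z))
    (tendsto_pi_nhds.2 fun z => ?_)
    (Eventually.of_forall fun t => mem_Fset_iff.2 ⟨weights t, c, rfl⟩)
  cases z using Fin.consCases with | _ b z
  simp only [weights, preactivation_cons]
  cases b
  · simp [overrideKernel, bval]
  · simp only [overrideKernel, Fin.cons_zero, if_true, ← prodBernoulli_bval]
    refine (continuous_prodBernoulli.tendsto _).comp (tendsto_pi_nhds.2 fun j => ?_)
    simpa [bval] using tendsto_sigmoid_signed_add (x j) (preactivation (V j) (c j) z)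

lemma overrideKernel_mem_closure_Fset (x : Fin n → Bool)
    {R : (Fin m → Bool) → (Fin n → Bool) → ℝ} (hR : R ∈ closure (Fset m n)) :
    overrideKernel x R ∈ closure (Fset (m + 1) n) := by
  have hcont : Continuous
      (overrideKernel x : ((Fin m → Bool) → (Fin n → Bool) → ℝ) → _) := by
    refine continuous_pi fun z => ?_
    unfold overrideKernel
    split_ifs <;> fun_prop
  have hmaps : Set.MapsTo (overrideKernel x) (Fset m n) (closure (Fset (m + 1) n)) :=
    fun _ => overrideKernel_mem_closure_Fset_of_mem x
  exact hmaps.closure_left hcont isClosed_closure hR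

lemma closure_Eset_subset_stdSimplex (m : ℕ) :
    closure (Eset m) ⊆ stdSimplex ℝ (Fin m → Bool) := by
  refine closure_minimal (fun p hp => ?_) (isClosed_stdSimplex ℝ _)
  obtain ⟨s, hs, rfl⟩ := mem_Eset_iff.1 hp
  exact prodBernoulli_mem_stdSimplex fun j => Set.Ioo_subset_Icc_self (hs j)

lemma sum_eq_one_of_mem_Eset {p : (Fin m → Bool) → ℝ} (hp : p ∈ Eset m) : ∑ z, p z = 1 :=
  (closure_Eset_subset_stdSimplex m (subset_closure hp)).2

lemma closure_Fset_subset_pi_stdSimplex (m n : ℕ) :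
    closure (Fset m n) ⊆ Set.univ.pi fun _ => stdSimplex ℝ (Fin n → Bool) := by
  refine closure_minimal (fun R hR z _ => ?_)
    (isClosed_set_pi fun _ _ => isClosed_stdSimplex ℝ _)
  obtain ⟨V, c, rfl⟩ := mem_Fset_iff.1 hR
  refine prodBernoulli_mem_stdSimplex fun j => ?_
  rw [sigmoid_eq_real_sigmoid]
  exact ⟨Real.sigmoid_nonneg _, Real.sigmoid_le_one _⟩

end Layers

section Mixtures

variable {k m n : ℕ}

lemma mix_mem_stdSimplex {p : (Fin m → Bool) → ℝ} (hp : p ∈ stdSimplex ℝ (Fin m → Bool))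
    {R : (Fin m → Bool) → (Fin n → Bool) → ℝ} (hR : ∀ z, R z ∈ stdSimplex ℝ (Fin n → Bool)) :
    mix p R ∈ stdSimplex ℝ (Fin n → Bool) := by
  have mix_eq_sum_smul : mix p R = ∑ z, p z • R z := by
    funext x
    simp [mix]
  rw [mix_eq_sum_smul]
  exact (convex_stdSimplex ℝ _).sum_mem (fun z _ => hp.1 z) hp.2 fun z _ => hR z

lemma image2_mix_closure_subset_stdSimplex (m n : ℕ) :
    Set.image2 mix (closure (Eset m)) (closure (Fset m n)) ⊆ stdSimplex ℝ (Fin n → Bool) :=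
  Set.image2_subset_iff.2 fun _ hp _ hR => mix_mem_stdSimplex
    (closure_Eset_subset_stdSimplex m hp)
    fun z => closure_Fset_subset_pi_stdSimplex m n hR z trivial

lemma isClosed_image2_mix_closure (m n : ℕ) :
    IsClosed (Set.image2 mix (closure (Eset m)) (closure (Fset m n))) := by
  have compact_Eset : IsCompact (closure (Eset m)) :=
    (isCompact_stdSimplex ℝ _).of_isClosed_subset isClosed_closure
      (closure_Eset_subset_stdSimplex m)
  have compact_Fset : IsCompact (closure (Fset m n)) :=
    (isCompact_univ_pi fun _ => isCompact_stdSimplex ℝ _).of_isClosed_subset isClosed_closure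
      (closure_Fset_subset_pi_stdSimplex m n)
  have mix_continuous : Continuous fun pR :
      ((Fin m → Bool) → ℝ) × ((Fin m → Bool) → (Fin n → Bool) → ℝ) => mix pR.1 pR.2 := by
    unfold mix
    fun_prop
  rw [← Set.image_prod]
  exact ((compact_Eset.prod compact_Fset).image mix_continuous).isClosed

/-- Mixtures in which the first output unit has finite weights `v` and bias `c`, while the other
`k` output units may be in the limit of infinite weights. Finiteness of `v` and `c` is what lets
one more hidden unit shift the mean of the first output bit to any value in `(0, 1)`. -/
def finiteFirstUnitMixtures (k m : ℕ) : Set ((Fin (k + 1) → Bool) → ℝ) :=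
  {q | ∃ p ∈ Eset m, ∃ R ∈ closure (Fset m k), ∃ (v : Fin m → ℝ) (c : ℝ),
    q = mix p fun z => prependBit (sigmoid (preactivation v c z)) (R z)}

lemma finiteFirstUnitMixtures_subset (k m : ℕ) :
    finiteFirstUnitMixtures k m ⊆
      Set.image2 mix (closure (Eset m)) (closure (Fset m (k + 1))) := by
  rintro _ ⟨p, hp, R, hR, v, c, rfl⟩
  exact Set.mem_image2_of_mem (subset_closure hp) (prependBit_sigmoid_mem_closure_Fset v c hR)

lemma prependBit_deltaAt_mem_finiteFirstUnitMixtures {r : ℝ} (hr : r ∈ Set.Ioo (0 : ℝ) 1)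
    (x : Fin k → Bool) : prependBit r (deltaAt x) ∈ finiteFirstUnitMixtures k m := by
  obtain ⟨c, rfl⟩ : ∃ c, sigmoid c = r := by
    rwa [sigmoid_eq_real_sigmoid, ← Set.mem_range, Real.range_sigmoid]
  obtain ⟨p, hp⟩ : (Eset m).Nonempty :=
    ⟨_, mem_Eset_iff.2 ⟨fun _ => 1 / 2, fun _ => by norm_num, rfl⟩⟩
  refine ⟨p, hp, _, const_deltaAt_mem_closure_Fset x, 0, c, ?_⟩
  rw [mix_prependBit_const (sum_eq_one_of_mem_Eset hp)]
  simp [preactivation, ← sum_mul, sum_eq_one_of_mem_Eset hp]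

lemma smul_prependBit_deltaAt_add_smul_mem_finiteFirstUnitMixtures {r w : ℝ}
    (hr : r ∈ Set.Ioo (0 : ℝ) 1) (hw : w ∈ Set.Ioo (0 : ℝ) 1) (x : Fin k → Bool)
    {q : (Fin (k + 1) → Bool) → ℝ} (hq : q ∈ finiteFirstUnitMixtures k m) :
    w • prependBit r (deltaAt x) + (1 - w) • q ∈ finiteFirstUnitMixtures k (m + 1) := by
  obtain ⟨p, hp, R, hR, v, c, rfl⟩ := hq
  have p_sum := sum_eq_one_of_mem_Eset hp
  obtain ⟨a, rfl⟩ := exists_sum_mul_sigmoid_eq p_sum (preactivation v c) hr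
  refine ⟨prependBit w p, prependBit_mem_Eset hw hp, overrideKernel x R,
    overrideKernel_mem_closure_Fset x hR, Fin.cons a v, c, ?_⟩
  rw [mix_prependBit, ← mix_prependBit_const p_sum]
  simp [preactivation_cons, overrideKernel, bval]

lemma mem_finiteFirstUnitMixtures_of_pos (hm : 2 ^ k ≤ m + 1) {p : (Fin (k + 1) → Bool) → ℝ}
    (hp : ∀ z, 0 < p z) (hsum : ∑ z, p z = 1) : p ∈ finiteFirstUnitMixtures k m := by
  have marginal_pos (x) : 0 < tailMarginal p x := add_pos (hp _) (hp _)
  have ratio_mem (x) : p (Fin.cons true x) / tailMarginal p x ∈ Set.Ioo (0 : ℝ) 1 :=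
    ⟨div_pos (hp _) (marginal_pos x),
      (div_lt_one (marginal_pos x)).2 (lt_add_of_pos_right _ (hp _))⟩
  rw [← sum_tailMarginal_smul_prependBit_deltaAt fun x => (marginal_pos x).ne']
  exact sum_smul_mem_of_forall_mix_mem (A := finiteFirstUnitMixtures k)
    (fun _ x => prependBit_deltaAt_mem_finiteFirstUnitMixtures (ratio_mem x) x)
    (fun _ x _ hq _ hw =>
      smul_prependBit_deltaAt_add_smul_mem_finiteFirstUnitMixtures (ratio_mem x) hw x hq)
    univ_nonempty (by simpa using hm) (fun x _ => marginal_pos x)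
    (by rw [sum_tailMarginal, hsum])

end Mixtures

/-- Proposition (no inputs, all weights free): for `n ≥ 2` and `m ≥ 2^(n-1) - 1`,
`{p^⊤R : p ∈ closure E_m, R ∈ closure F_{m,n}} = Δ_n`. -/
theorem universal_approximation_distributions
    (n m : ℕ) (hn : 2 ≤ n) (hm : 2 ^ (n - 1) - 1 ≤ m) :
    {q | ∃ p ∈ closure (Eset m), ∃ R ∈ closure (Fset m n), q = mix p R} = simplex n := by
  obtain ⟨k, rfl⟩ : ∃ k, n = k + 1 := ⟨n - 1, by omega⟩
  have units_ge : 2 ^ k ≤ m + 1 := by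
    rw [Nat.add_sub_cancel] at hm
    omega
  have eq_image2 : {q | ∃ p ∈ closure (Eset m), ∃ R ∈ closure (Fset m (k + 1)), q = mix p R} =
      Set.image2 mix (closure (Eset m)) (closure (Fset m (k + 1))) := by
    simp only [Set.image2, eq_comm]
  rw [eq_image2]
  refine Set.Subset.antisymm (image2_mix_closure_subset_stdSimplex m (k + 1)) ?_
  calc simplex (k + 1)
    _ ⊆ closure {p ∈ stdSimplex ℝ (Fin (k + 1) → Bool) | ∀ x, 0 < p x} :=
      stdSimplex_subset_closure_pos
    _ ⊆ Set.image2 mix (closure (Eset m)) (closure (Fset m (k + 1))) :=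
      closure_minimal
        (fun p hp => finiteFirstUnitMixtures_subset k m
          (mem_finiteFirstUnitMixtures_of_pos units_ge hp.2 hp.1.2))
        (isClosed_image2_mix_closure m (k + 1))
end

section
/- Let n ≥ 1, N = 2^n − 1, and let Q ∈ Δ_{N,n} be the deterministic kernel Q(·|z) = δ_{bin_n(l(z))} for all z ∈ {0,1}^N. Then { p^⊤Q : p ∈ E_N } = Δ_n^+, the set of strictly positive probability distributions on {0,1}^n. -/
open Finset

/-!
Under the product distribution with parameters `q`, the event `lidx z ≤ k` says that every bit
`j ≥ k` vanishes, so it has probability `∏ j ≥ k, q j`. Conversely, a strictly positive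
distribution on `{0, …, N}` with partial sums `S k` is the law of `lidx` when
`q j = S j / S (j + 1)`: the product telescopes to `S k / S N = S k`, and positivity of the
increments of `S` gives `q j ∈ (0, 1)`. Relabelling `{0, …, 2 ^ n - 1}` by binary expansion is a
bijection onto `{0,1}^n`.
-/

section Sequences

theorem eq_of_sum_range_succ_eq {M : Type*} [AddCommMonoid M] [IsLeftCancelAdd M] {f g : ℕ → M}
    {N : ℕ} (h : ∀ k ≤ N, ∑ l ∈ range (k + 1), f l = ∑ l ∈ range (k + 1), g l) {k : ℕ}
    (hk : k ≤ N) : f k = g k := by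
  cases k with
  | zero => simpa using h 0 hk
  | succ k =>
    have h_succ := h (k + 1) hk
    rw [sum_range_succ, sum_range_succ _ (k + 1), h k (by lia)] at h_succ
    exact add_left_cancel h_succ

theorem sum_range_succ_pos {M : Type*} [AddCommMonoid M] [PartialOrder M]
    [IsOrderedCancelAddMonoid M] {w : ℕ → M} {N : ℕ} (hw : ∀ l ≤ N, 0 < w l) {k : ℕ}
    (hk : k ≤ N) : 0 < ∑ l ∈ range (k + 1), w l :=
  sum_pos (fun l hl => hw l ((mem_range_succ_iff.1 hl).trans hk)) nonempty_range_add_one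

theorem prod_Ico_div_succ {G : Type*} [CommGroupWithZero G] {S : ℕ → G} {k N : ℕ} (hkN : k ≤ N)
    (hS : ∀ j ∈ Icc k N, S j ≠ 0) : ∏ j ∈ Ico k N, S j / S (j + 1) = S k / S N := by
  induction N, hkN using Nat.le_induction with
  | base => simp [hS k]
  | succ N hkN ih =>
    have hSN : S N ≠ 0 := hS N (by simp [hkN])
    rw [prod_Ico_succ_top hkN, ih fun j hj => hS j (Icc_subset_Icc_right N.le_succ hj),
      div_mul_div_cancel₀ hSN]

theorem prod_fin_filter_le_val {M : Type*} [CommMonoid M] (f : ℕ → M) (k N : ℕ) :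
    ∏ j : Fin N with k ≤ j.val, f j = ∏ j ∈ Ico k N, f j := by
  have filter_range : {j ∈ range N | k ≤ j} = Ico k N := by
    ext j
    simp [and_comm]
  rw [prod_filter, Fin.prod_univ_eq_prod_range (fun j => if k ≤ j then f j else 1), ← prod_filter,
    filter_range]

/-- The ratio `S j / S (j + 1)` of consecutive partial sums `S j = w 0 + ⋯ + w j`: the conditional
probability of `{0, …, j}` given `{0, …, j + 1}` under the weights `w`. -/
def partialSumRatio {K : Type*} [Field K] (w : ℕ → K) (j : ℕ) : K :=
  (∑ l ∈ range (j + 1), w l) / ∑ l ∈ range (j + 2), w l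

variable {K : Type*} [Field K] [LinearOrder K] [IsStrictOrderedRing K] {w : ℕ → K} {N : ℕ}

theorem partialSumRatio_mem_Ioo (hw : ∀ l ≤ N, 0 < w l) {j : ℕ} (hj : j < N) :
    partialSumRatio w j ∈ Set.Ioo 0 1 := by
  have hS : 0 < ∑ l ∈ range (j + 1), w l := sum_range_succ_pos hw hj.le
  have hS_succ : 0 < ∑ l ∈ range (j + 2), w l := sum_range_succ_pos hw hj
  refine ⟨div_pos hS hS_succ, (div_lt_one hS_succ).2 ?_⟩
  rw [sum_range_succ _ (j + 1)]
  exact lt_add_of_pos_right _ (hw _ hj)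

theorem prod_partialSumRatio (hw : ∀ l ≤ N, 0 < w l) {k : ℕ} (hk : k ≤ N) :
    ∏ j : Fin N with k ≤ j.val, partialSumRatio w j =
      (∑ l ∈ range (k + 1), w l) / ∑ l ∈ range (N + 1), w l := by
  rw [prod_fin_filter_le_val]
  exact prod_Ico_div_succ (S := fun j => ∑ l ∈ range (j + 1), w l) hk fun j hj =>
    (sum_range_succ_pos hw (mem_Icc.1 hj).2).ne'

end Sequences

section Pushforward

/-- The pushforward of the weights `p` along `f`; for a probability vector `p`, the law of `f`. -/
def pushforward {Z α M : Type*} [Fintype Z] [DecidableEq α] [AddCommMonoid M] (f : Z → α)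
    (p : Z → M) (a : α) : M :=
  ∑ z with f z = a, p z

variable {Z α β M : Type*} [Fintype Z] [DecidableEq α] [AddCommMonoid M]

theorem sum_pushforward (f : Z → α) (p : Z → M) (s : Finset α) :
    ∑ a ∈ s, pushforward f p a = ∑ z with f z ∈ s, p z :=
  sum_fiberwise_eq_sum_filter univ s f p

theorem pushforward_pos [PartialOrder M] [IsOrderedCancelAddMonoid M] {f : Z → α} {p : Z → M}
    (hf : Function.Surjective f) (hp : ∀ z, 0 < p z) (a : α) : 0 < pushforward f p a := by
  obtain ⟨z, hz⟩ := hf a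
  exact sum_pos (fun z _ => hp z) ⟨z, by simpa using hz⟩

theorem pushforward_comp_apply [DecidableEq β] {f : Z → α} {e : α → β} {s : Set α}
    (he : Set.InjOn e s) (hf : ∀ z, f z ∈ s) (p : Z → M) {a : α} (ha : a ∈ s) :
    pushforward (e ∘ f) p (e a) = pushforward f p a := by
  simp only [pushforward, Function.comp_apply, he.eq_iff (hf _) ha]

theorem mix_deltaAt {m n : ℕ} (f : (Fin m → Bool) → Fin n → Bool) (p : (Fin m → Bool) → ℝ) :
    mix p (fun z => deltaAt (f z)) = pushforward f p := by
  funext x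
  simp only [mix, deltaAt, pushforward, mul_ite, mul_one, mul_zero, sum_filter, eq_comm]

end Pushforward

section ProductDistribution

/-- The product distribution on `{0,1}^ι` whose `j`-th bit is `false` with probability `q j`. -/
def productDist {ι R : Type*} [Fintype ι] [CommRing R] (q : ι → R) (z : ι → Bool) : R :=
  ∏ j, if z j then 1 - q j else q j

variable {ι R : Type*} [Fintype ι] [CommRing R]

theorem Eset_eq_image_productDist (m : ℕ) :
    Eset m = productDist '' {q | ∀ j, q j ∈ Set.Ioo 0 1} := by
  ext p
  simp only [Eset, Set.mem_image, Set.mem_ofPred_eq, productDist, funext_iff, eq_comm]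

theorem productDist_pos [PartialOrder R] [IsStrictOrderedRing R] {q : ι → R}
    (hq : ∀ j, q j ∈ Set.Ioo 0 1) (z : ι → Bool) : 0 < productDist q z := by
  refine prod_pos fun j _ => ?_
  split_ifs
  · exact sub_pos.2 (hq j).2
  · exact (hq j).1

theorem sum_piFinset_productDist [DecidableEq ι] (q : ι → R) (t : ι → Finset Bool) :
    ∑ z ∈ Fintype.piFinset t, productDist q z = ∏ j, ∑ b ∈ t j, if b then 1 - q j else q j :=
  (prod_univ_sum t fun j b => if b then 1 - q j else q j).symm

theorem sum_productDist [DecidableEq ι] (q : ι → R) : ∑ z, productDist q z = 1 := by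
  rw [← Fintype.piFinset_univ, sum_piFinset_productDist]
  simp

end ProductDistribution

section LargestIndex

variable {N : ℕ}

theorem lidx_le_iff {z : Fin N → Bool} {k : ℕ} : lidx z ≤ k ↔ ∀ j, z j → (j : ℕ) < k := by
  simp [lidx]

theorem lidx_le (z : Fin N → Bool) : lidx z ≤ N :=
  lidx_le_iff.2 fun j _ => j.isLt

theorem lidx_decide_lt {l : ℕ} (hl : l ≤ N) : lidx (fun j : Fin N => decide ((j : ℕ) < l)) = l := by
  refine eq_of_forall_ge_iff fun k => lidx_le_iff.trans ⟨fun h => ?_, fun hlk j hj => ?_⟩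
  · by_contra! hkl
    exact lt_irrefl k (h ⟨k, hkl.trans_le hl⟩ (decide_eq_true hkl))
  · exact (of_decide_eq_true hj).trans_le hlk

theorem filter_lidx_le (k : ℕ) :
    ({z | lidx z ≤ k} : Finset (Fin N → Bool)) =
      Fintype.piFinset fun j => if k ≤ j.val then {false} else univ := by
  ext z
  simp only [mem_filter_univ, lidx_le_iff, Fintype.mem_piFinset]
  refine forall_congr' fun j => ?_
  split_ifs with hkj
  · simp [hkj.not_gt]
  · simp [not_le.1 hkj]

theorem sum_range_succ_pushforward_lidx {R : Type*} [CommRing R] (q : Fin N → R) (k : ℕ) :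
    ∑ l ∈ range (k + 1), pushforward lidx (productDist q) l = ∏ j with k ≤ j.val, q j := by
  simp only [sum_pushforward, mem_range, Nat.lt_succ_iff, filter_lidx_le, sum_piFinset_productDist,
    prod_filter]
  refine prod_congr rfl fun j _ => ?_
  split_ifs <;> simp

theorem pushforward_lidx_productDist_partialSumRatio {K : Type*} [Field K] [LinearOrder K]
    [IsStrictOrderedRing K] {w : ℕ → K} (hw : ∀ l ≤ N, 0 < w l)
    (hw_sum : ∑ l ∈ range (N + 1), w l = 1) {l : ℕ} (hl : l ≤ N) :
    pushforward lidx (productDist fun j : Fin N => partialSumRatio w j) l = w l := by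
  refine eq_of_sum_range_succ_eq (fun k hk => ?_) hl
  rw [sum_range_succ_pushforward_lidx, prod_partialSumRatio hw hk, hw_sum, div_one]

end LargestIndex

section Image

variable {α : Type*} {N : ℕ} {e : ℕ → α}

theorem surjective_comp_lidx (he : Set.SurjOn e (Set.Iic N) Set.univ) :
    Function.Surjective (e ∘ lidx : (Fin N → Bool) → α) := by
  intro a
  obtain ⟨l, hl, rfl⟩ := he (Set.mem_univ a)
  exact ⟨_, congrArg e (lidx_decide_lt hl)⟩

theorem sum_range_succ_comp [Fintype α] {M : Type*} [AddCommMonoid M]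
    (he : Set.BijOn e (Set.Iic N) Set.univ) (r : α → M) :
    ∑ l ∈ range (N + 1), r (e l) = ∑ a, r a := by
  refine sum_nbij e (fun _ _ => mem_univ _) ?_ ?_ fun _ _ => rfl
  · simpa [Nat.range_succ_eq_Iic] using he.injOn
  · simpa [Nat.range_succ_eq_Iic] using he.surjOn

theorem image_of_products_is_positive_simplex_general [Fintype α] [DecidableEq α]
    (he : Set.BijOn e (Set.Iic N) Set.univ) :
    pushforward (e ∘ lidx) '' Eset N = {r : α → ℝ | (∀ a, 0 < r a) ∧ ∑ a, r a = 1} := by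
  rw [Eset_eq_image_productDist, Set.image_image]
  refine Set.Subset.antisymm ?_ ?_
  · rintro _ ⟨q, hq, rfl⟩
    refine ⟨pushforward_pos (surjective_comp_lidx he.surjOn) (productDist_pos hq), ?_⟩
    simp only [sum_pushforward, mem_univ, filter_true, sum_productDist]
  · rintro r ⟨hr_pos, hr_sum⟩
    have hw_pos : ∀ l ≤ N, 0 < r (e l) := fun l _ => hr_pos (e l)
    have hw_sum : ∑ l ∈ range (N + 1), r (e l) = 1 := (sum_range_succ_comp he r).trans hr_sum
    refine ⟨fun j => partialSumRatio (r ∘ e) j,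
      fun j => partialSumRatio_mem_Ioo hw_pos j.isLt, funext fun a => ?_⟩
    obtain ⟨l, hl, rfl⟩ := he.surjOn (Set.mem_univ a)
    exact (pushforward_comp_apply he.injOn lidx_le _ hl).trans
      (pushforward_lidx_productDist_partialSumRatio hw_pos hw_sum hl)

end Image

theorem bijOn_binVec (n : ℕ) : Set.BijOn (binVec n) (Set.Iic (2 ^ n - 1)) Set.univ := by
  refine Set.InvOn.bijOn (f' := Nat.ofBits) ⟨fun l hl => ?_, fun x _ => ?_⟩
    (Set.mapsTo_univ _ _) fun x _ => Nat.le_sub_one_of_lt (Nat.ofBits_lt_two_pow x)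
  · have hl_lt : l < 2 ^ n := Nat.lt_of_le_sub_one (by positivity) hl
    exact (Nat.ofBits_testBit l n).trans (Nat.mod_eq_of_lt hl_lt)
  · exact funext fun i => Nat.testBit_ofBits_lt x i i.isLt

/-- Proposition 5: for `N = 2^n - 1` and `Q` the deterministic kernel
`Q(·|z) = δ_{bin_n(l(z))}`, the image of `E_N` under `p ↦ p^⊤Q` is exactly `Δ_n^+`. -/
theorem image_of_products_is_positive_simplex (n : ℕ) (hn : 1 ≤ n) :
    (fun p => mix p (fun (z : Fin (2 ^ n - 1) → Bool) => deltaAt (binVec n (lidx z))))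
      '' Eset (2 ^ n - 1) = simplexPos n := by
  have h_mix : (fun p => mix p fun z : Fin (2 ^ n - 1) → Bool => deltaAt (binVec n (lidx z))) =
      pushforward (binVec n ∘ lidx) := funext (mix_deltaAt (binVec n ∘ lidx))
  rw [h_mix]
  exact image_of_products_is_positive_simplex_general (bijOn_binVec n)
end
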